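/- A nonzero linear subspace M of Hol(𝔻) has the division property if and only if the following two conditions hold: (i) Z(M) = ∅; (ii) the quotient space M/((S−λI)(M) ∩ M) has dimension 1 for every λ ∈ 𝔻. -/

import Mathlib

noncomputable section

open Metric Set Filter Topology
open scoped Classical

/-- Functions holomorphic on the open unit disc, normalized to vanish outside it.
This is our model of `Hol(𝔻)`. -/
def HolDisc : Set (ℂ → ℂ) :=
  {f | DifferentiableOn ℂ f (Metric.ball (0:ℂ) 1) ∧ ∀ z ∉ Metric.ball (0:ℂ) 1, f z = 0}

/-- The constant function `1` of `Hol(𝔻)` (normalized to vanish outside the disc). -/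
def oneD : ℂ → ℂ := fun z => if z ∈ Metric.ball (0:ℂ) 1 then 1 else 0

/-- The shift `S`, `(Sf)(z) = z f(z)`, as a linear map. -/
def shiftL : (ℂ → ℂ) →ₗ[ℂ] (ℂ → ℂ) where
  toFun f := fun z => z * f z
  map_add' f g := by funext z; simp [mul_add]
  map_smul' c f := by funext z; simp [smul_eq_mul]; ring

/-- Division: `f_λ(z) = (f(z) - f(λ))/(z - λ)` for `z ≠ λ`, `f_λ(λ) = f'(λ)`,
normalized to vanish outside the disc.  `fdivB 0` is the backward shift `T`. -/
def fdivB (lam : ℂ) (f : ℂ → ℂ) : ℂ → ℂ := fun z =>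
  if z ∈ Metric.ball (0:ℂ) 1 then
    (if z = lam then deriv f lam else (f z - f lam) / (z - lam))
  else 0

/-- The reflected model of the shift `S⁻` on `H₀(ℂ ∖ 𝔻̄)`: a function `h` on `{|ζ|>1}`
vanishing at `∞` is represented by `k(w) = h(1/w)` (holomorphic on `𝔻`, `k 0 = 0`);
`S⁻` corresponds to `k ↦ (k(z) - k(0))/z - k'(0)·1`. -/
def negShiftF (k : ℂ → ℂ) : ℂ → ℂ := fun z => fdivB 0 k z - deriv k 0 * oneD z

/-- `n`-th Taylor coefficient at the origin. -/
def tCoeff (n : ℕ) (f : ℂ → ℂ) : ℂ := iteratedDeriv n f 0 / (Nat.factorial n)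

/-!
Evaluation at a point `λ` of the disc is a linear functional on `M` which kills `(S - λI)(M) ∩ M`,
and the division property at `λ` says precisely that its kernel is no larger. If some `f ∈ M` does
not vanish at `λ`, this kernel is a hyperplane, so it equals the smaller subspace exactly when the
latter has codimension `1`. Such an `f` exists because each division by `z - λ` lowers the order of
vanishing at `λ` by one.
-/

/-- `M` has the division property at the point `lam`. -/
def HasDivisionAt (M : Submodule ℂ (ℂ → ℂ)) (lam : ℂ) : Prop :=
  ∀ f ∈ M, f lam = 0 → fdivB lam f ∈ M

/-- The subspace `(S - λI)(M) ∩ M`, viewed inside `M` so that its quotient can be formed. -/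
def shiftSubRange (M : Submodule ℂ (ℂ → ℂ)) (lam : ℂ) : Submodule ℂ M :=
  Submodule.comap M.subtype
    (Submodule.map (shiftL - lam • (LinearMap.id : (ℂ → ℂ) →ₗ[ℂ] (ℂ → ℂ))) M ⊓ M)

/-- Point evaluation at `lam` as a linear functional on `M`. -/
def evalAt (M : Submodule ℂ (ℂ → ℂ)) (lam : ℂ) : Module.Dual ℂ M :=
  (LinearMap.proj lam : (ℂ → ℂ) →ₗ[ℂ] ℂ).domRestrict M

section LinearAlgebra

variable {K V : Type*} [DivisionRing K] [AddCommGroup V] [Module K V]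

theorem rank_quotient_eq_one_iff_isCoatom {N : Submodule K V} :
    Module.rank K (V ⧸ N) = 1 ↔ IsCoatom N := by
  rw [Module.rank_eq_one_iff_finrank_eq_one, ← isSimpleModule_iff_finrank_eq_one,
    isSimpleModule_iff_isCoatom]

theorem rank_quotient_eq_one_iff_eq_ker {φ : V →ₗ[K] K} (hφ : φ ≠ 0)
    {N : Submodule K V} (hN : N ≤ LinearMap.ker φ) :
    Module.rank K (V ⧸ N) = 1 ↔ N = LinearMap.ker φ := by
  have hker : IsCoatom (LinearMap.ker φ) :=
    LinearMap.isCoatom_ker_of_surjective (LinearMap.surjective hφ)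
  rw [rank_quotient_eq_one_iff_isCoatom]
  exact ⟨fun h ↦ ((h.le_iff_eq hker.1).1 hN).symm, fun h ↦ h ▸ hker⟩

end LinearAlgebra

section DSlope

variable {𝕜 E : Type*} [NontriviallyNormedField 𝕜] [NormedAddCommGroup E] [NormedSpace 𝕜 E]
  {f : 𝕜 → E} {a : 𝕜}

theorem dslope_sub_smul_of_continuousAt (hf : ContinuousAt f a) :
    dslope (fun z ↦ (z - a) • f z) a = f := by
  have hslope : EqOn (dslope (fun z ↦ (z - a) • f z) a) f {a}ᶜ := eqOn_dslope_sub_smul f a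
  have hderiv : HasDerivAt (fun z ↦ (z - a) • f z) (f a) a := by
    rw [hasDerivAt_iff_tendsto_slope]
    refine (hf.tendsto.mono_left nhdsWithin_le_nhds).congr' ?_
    filter_upwards [self_mem_nhdsWithin] with z hz
    rw [← hslope hz, dslope_of_ne _ hz]
  funext z
  obtain rfl | hz := eq_or_ne z a
  · rw [dslope_same, hderiv.deriv]
  · exact hslope hz

theorem analyticOrderAt_dslope_add_one (hf : AnalyticAt 𝕜 f a) (h0 : f a = 0) :
    analyticOrderAt (dslope f a) a + 1 = analyticOrderAt f a := by
  have hdslope : AnalyticAt 𝕜 (dslope f a) a :=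
    let ⟨_, hp⟩ := hf
    ⟨_, hp.has_fpower_series_dslope_fslope⟩
  have hfactor : (fun z ↦ z - a) • dslope f a = f := funext fun z ↦ sub_smul_dslope_of_zero h0 z
  calc analyticOrderAt (dslope f a) a + 1
      = analyticOrderAt (fun z ↦ z - a) a + analyticOrderAt (dslope f a) a := by
        rw [analyticOrderAt_id_sub_const_self, add_comm]
    _ = analyticOrderAt ((fun z ↦ z - a) • dslope f a) a :=
        (analyticOrderAt_smul (by fun_prop) hdslope).symm
    _ = analyticOrderAt f a := by rw [hfactor]

end DSlope

section Disc

variable {f g : ℂ → ℂ} {lam z : ℂ}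

theorem analyticAt_of_mem_holDisc (hf : f ∈ HolDisc) (hlam : lam ∈ ball (0 : ℂ) 1) :
    AnalyticAt ℂ f lam :=
  hf.1.analyticAt (isOpen_ball.mem_nhds hlam)

theorem analyticOrderAt_ne_top_of_mem_holDisc (hf : f ∈ HolDisc) (hne : f ≠ 0)
    (hlam : lam ∈ ball (0 : ℂ) 1) : analyticOrderAt f lam ≠ ⊤ := by
  contrapose! hne with htop
  have hzero : EqOn f 0 (ball 0 1) :=
    (hf.1.analyticOnNhd isOpen_ball).eqOn_zero_of_preconnected_of_eventuallyEq_zero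
      (convex_ball _ _).isPreconnected hlam (analyticOrderAt_eq_top.1 htop)
  funext z
  by_cases hz : z ∈ ball (0 : ℂ) 1
  exacts [hzero hz, hf.2 z hz]

theorem fdivB_eq_dslope (hz : z ∈ ball (0 : ℂ) 1) : fdivB lam f z = dslope f lam z := by
  obtain rfl | hne := eq_or_ne z lam
  · simp [fdivB, hz]
  · simp [fdivB, hz, hne, dslope_of_ne, slope_def_field]

theorem fdivB_sub_mul (hg : ContinuousAt g lam) (hg0 : ∀ z ∉ ball (0 : ℂ) 1, g z = 0) :
    fdivB lam (fun z ↦ (z - lam) * g z) = g := by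
  funext z
  by_cases hz : z ∈ ball (0 : ℂ) 1
  · rw [fdivB_eq_dslope hz]
    exact congrFun (dslope_sub_smul_of_continuousAt hg) z
  · simp [fdivB, hz, hg0 z hz]

theorem sub_mul_fdivB (hf : ∀ z ∉ ball (0 : ℂ) 1, f z = 0) (h0 : f lam = 0) (z : ℂ) :
    (z - lam) * fdivB lam f z = f z := by
  by_cases hz : z ∈ ball (0 : ℂ) 1
  · rw [fdivB_eq_dslope hz]
    exact sub_smul_dslope_of_zero h0 z
  · simp [fdivB, hz, hf z hz]

theorem analyticOrderAt_fdivB_add_one (hf : AnalyticAt ℂ f lam) (hlam : lam ∈ ball (0 : ℂ) 1)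
    (h0 : f lam = 0) : analyticOrderAt (fdivB lam f) lam + 1 = analyticOrderAt f lam := by
  have hdslope : fdivB lam f =ᶠ[𝓝 lam] dslope f lam := by
    filter_upwards [isOpen_ball.mem_nhds hlam] with z hz using fdivB_eq_dslope hz
  rw [analyticOrderAt_congr hdslope, analyticOrderAt_dslope_add_one hf h0]

end Disc

section Subspace

variable {M : Submodule ℂ (ℂ → ℂ)} {lam : ℂ}

theorem mem_shiftSubRange {f : M} :
    f ∈ shiftSubRange M lam ↔ ∃ g ∈ M, (fun z ↦ (z - lam) * g z) = f := by
  have happly (g : ℂ → ℂ) :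
      (shiftL - lam • (LinearMap.id : (ℂ → ℂ) →ₗ[ℂ] (ℂ → ℂ))) g = fun z ↦ (z - lam) * g z := by
    funext z
    simp [shiftL, sub_mul]
  simp only [shiftSubRange, Submodule.mem_comap, Submodule.mem_inf, Submodule.mem_map, happly,
    Submodule.subtype_apply, f.2, and_true]

theorem shiftSubRange_le_ker_evalAt : shiftSubRange M lam ≤ LinearMap.ker (evalAt M lam) := by
  intro f hf
  obtain ⟨g, -, hg⟩ := mem_shiftSubRange.1 hf
  change (f : ℂ → ℂ) lam = 0
  simp [← hg]

theorem evalAt_ne_zero_iff : evalAt M lam ≠ 0 ↔ ∃ f ∈ M, f lam ≠ 0 := by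
  simp [evalAt, LinearMap.ext_iff]

theorem hasDivisionAt_iff_shiftSubRange_eq_ker (hM : (M : Set (ℂ → ℂ)) ⊆ HolDisc)
    (hlam : lam ∈ ball (0 : ℂ) 1) :
    HasDivisionAt M lam ↔ shiftSubRange M lam = LinearMap.ker (evalAt M lam) := by
  constructor
  · refine fun hdiv ↦ shiftSubRange_le_ker_evalAt.antisymm fun f h0 ↦ mem_shiftSubRange.2 ?_
    exact ⟨fdivB lam f, hdiv f f.2 h0, funext (sub_mul_fdivB (hM f.2).2 h0)⟩
  · intro heq f hf h0
    have hmem : (⟨f, hf⟩ : M) ∈ shiftSubRange M lam := heq ▸ h0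
    obtain ⟨g, hg, rfl⟩ := mem_shiftSubRange.1 hmem
    rwa [fdivB_sub_mul (analyticAt_of_mem_holDisc (hM hg) hlam).continuousAt (hM hg).2]

theorem HasDivisionAt.exists_apply_ne_zero (hdiv : HasDivisionAt M lam)
    (hM : (M : Set (ℂ → ℂ)) ⊆ HolDisc) (hM0 : M ≠ ⊥) (hlam : lam ∈ ball (0 : ℂ) 1) :
    ∃ f ∈ M, f lam ≠ 0 := by
  obtain ⟨f, hf, n, hn⟩ : ∃ f ∈ M, ∃ n : ℕ, n = analyticOrderAt f lam := by
    obtain ⟨f, hf, hne⟩ := M.ne_bot_iff.1 hM0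
    exact ⟨f, hf,
      ENat.ne_top_iff_exists.1 (analyticOrderAt_ne_top_of_mem_holDisc (hM hf) hne hlam)⟩
  induction n generalizing f with
  | zero =>
    exact ⟨f, hf, (analyticAt_of_mem_holDisc (hM hf) hlam).analyticOrderAt_eq_zero.1 hn.symm⟩
  | succ n ih =>
    by_cases h0 : f lam = 0
    · have horder := analyticOrderAt_fdivB_add_one (analyticAt_of_mem_holDisc (hM hf) hlam) hlam h0
      refine ih (fdivB lam f) (hdiv f hf h0) ?_
      rw [← hn, Nat.cast_succ] at horder
      exact (WithTop.add_right_cancel ENat.one_ne_top horder).symm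
    · exact ⟨f, hf, h0⟩

theorem statement1_general (hM : (M : Set (ℂ → ℂ)) ⊆ HolDisc) (hM0 : M ≠ ⊥)
    (hlam : lam ∈ ball (0 : ℂ) 1) :
    HasDivisionAt M lam ↔
      (∃ f ∈ M, f lam ≠ 0) ∧ Module.rank ℂ (M ⧸ shiftSubRange M lam) = 1 := by
  have hrank (hnv : ∃ f ∈ M, f lam ≠ 0) :
      Module.rank ℂ (M ⧸ shiftSubRange M lam) = 1 ↔ HasDivisionAt M lam := by
    rw [hasDivisionAt_iff_shiftSubRange_eq_ker hM hlam]
    exact rank_quotient_eq_one_iff_eq_ker (evalAt_ne_zero_iff.2 hnv) shiftSubRange_le_ker_evalAt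
  rw [and_congr_right hrank]
  exact (and_iff_right_of_imp fun hdiv ↦ hdiv.exists_apply_ne_zero hM hM0 hlam).symm

end Subspace

/-- A nonzero linear subspace `M` of `Hol(𝔻)` has the division property
iff (i) `Z(M) = ∅` and (ii) `dim M/((S-λI)(M) ∩ M) = 1` for every `λ ∈ 𝔻`. -/
theorem statement1 (M : Submodule ℂ (ℂ → ℂ)) (hMhol : (M : Set (ℂ → ℂ)) ⊆ HolDisc)
    (hM0 : M ≠ ⊥) :
    (∀ lam ∈ Metric.ball (0:ℂ) 1, ∀ f ∈ M, f lam = 0 → fdivB lam f ∈ M)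
    ↔ ((∀ lam ∈ Metric.ball (0:ℂ) 1, ∃ f ∈ M, f lam ≠ 0) ∧
        ∀ lam ∈ Metric.ball (0:ℂ) 1,
          Module.rank ℂ
            (↥M ⧸ Submodule.comap M.subtype
              (Submodule.map (shiftL - lam • (LinearMap.id : (ℂ → ℂ) →ₗ[ℂ] (ℂ → ℂ))) M ⊓ M))
            = 1) := by
  rw [← forall₂_and]
  exact forall₂_congr fun lam hlam ↦ statement1_general hMhol hM0 hlam
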